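/- Let $f(u) = \int_0^u \frac{g(\xi)}{|u-\xi|^{\delta} |\xi|^{\beta} |u|^{\alpha}}\,d\xi$ for $u > 0$, where $1 < r < q < \infty$, $\alpha + \beta + \delta = 1 - (\frac{1}{r} - \frac{1}{q})$, $\alpha + \beta \ge 0$, and $\alpha + \delta > \frac{1}{q}$. Then there is a constant $C$ (depending only on the exponents) such that $\|f\|_{L^q((0,\infty))} \le C \|g\|_{L^r((0,\infty))}$ for all measurable $g$ on $(0,\infty)$. -/

import Mathlib

open MeasureTheory Set NNReal


lemma P1 (p R : ℝ) (hp : -1 < p) (hR : 0 ≤ R) :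
    ∫⁻ x in Ioc 0 R, ENNReal.ofReal (x ^ p) = ENNReal.ofReal (R ^ (p+1) / (p+1)) := by
  have hi : IntegrableOn (fun x : ℝ => x ^ p) (Ioc 0 R) := by
    have := intervalIntegral.intervalIntegrable_rpow' (a := 0) (b := R) hp
    rwa [intervalIntegrable_iff_integrableOn_Ioc_of_le hR] at this
  rw [← ofReal_integral_eq_lintegral_ofReal hi]
  · rw [← intervalIntegral.integral_of_le hR, integral_rpow (Or.inl hp),
      Real.zero_rpow (by linarith), sub_zero]
  · filter_upwards [ae_restrict_mem measurableSet_Ioc] with x hx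
    exact Real.rpow_nonneg hx.1.le _

lemma P2 (p R : ℝ) (hp : p < -1) (hR : 0 < R) :
    ∫⁻ x in Ioi R, ENNReal.ofReal (x ^ p) = ENNReal.ofReal (-R ^ (p+1) / (p+1)) := by
  rw [← ofReal_integral_eq_lintegral_ofReal (integrableOn_Ioi_rpow_of_lt hp hR),
    integral_Ioi_rpow_of_lt hp hR]
  filter_upwards [ae_restrict_mem measurableSet_Ioi] with x hx
  exact Real.rpow_nonneg (hR.trans hx).le _

lemma kerbound (α β δ u ξ : ℝ) (hab : 0 ≤ α + β) (h0 : 0 < ξ) (hu : ξ < u) :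
    (u - ξ) ^ (-δ) * ξ ^ (-β) * u ^ (-α) ≤
      2 ^ |β| * (u - ξ) ^ (-(α + β + δ)) + 2 ^ |δ| * (u ^ (-(α+δ)) * ξ ^ (-β)) := by
  have hu0 : 0 < u := h0.trans hu
  have hd : 0 < u - ξ := by linarith
  have key : ∀ (x p : ℝ), 0 < x → x ≤ u → u / 2 ≤ x → x ^ (-p) ≤ 2 ^ |p| * u ^ (-p) := by
    intro x p hx hxu hux
    rcases le_total 0 p with hp | hp
    · rw [abs_of_nonneg hp]
      calc x ^ (-p) ≤ (u/2) ^ (-p) := Real.rpow_le_rpow_of_nonpos (by linarith) hux (by linarith)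
        _ = _ := by
          rw [Real.div_rpow hu0.le (by norm_num), Real.rpow_neg (by norm_num : (0:ℝ) ≤ 2)]
          field_simp
    · calc x ^ (-p) ≤ u ^ (-p) := Real.rpow_le_rpow hx.le hxu (by linarith)
        _ ≤ _ := le_mul_of_one_le_left (Real.rpow_nonneg hu0.le _)
          (Real.one_le_rpow (by norm_num) (abs_nonneg _))
  rcases le_total ξ (u/2) with h | h
  · have h1 := key (u - ξ) δ hd (by linarith) (by linarith)
    have : (u - ξ) ^ (-δ) * ξ ^ (-β) * u ^ (-α) ≤ 2 ^ |δ| * (u ^ (-(α+δ)) * ξ ^ (-β)) := by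
      calc _ ≤ (2 ^ |δ| * u ^ (-δ)) * ξ ^ (-β) * u ^ (-α) := by gcongr
        _ = _ := by
          rw [show -(α+δ) = -α + -δ by ring, Real.rpow_add hu0]; ring
    have : 0 ≤ 2 ^ |β| * (u - ξ) ^ (-(α + β + δ)) := by positivity
    linarith
  · have h1 := key ξ β h0 hu.le h
    have : (u - ξ) ^ (-δ) * ξ ^ (-β) * u ^ (-α) ≤ 2 ^ |β| * (u - ξ) ^ (-(α + β + δ)) := by
      calc _ ≤ (u - ξ) ^ (-δ) * (2 ^ |β| * u ^ (-β)) * u ^ (-α) := by gcongr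
        _ = 2 ^ |β| * ((u - ξ) ^ (-δ) * u ^ (-(α+β))) := by
          rw [show -(α+β) = -α + -β by ring, Real.rpow_add hu0]; ring
        _ ≤ 2 ^ |β| * ((u - ξ) ^ (-δ) * (u-ξ) ^ (-(α+β))) := by
          gcongr ?_ * (?_ * ?_)
          exact Real.rpow_le_rpow_of_nonpos hd (by linarith) (by linarith)
        _ = _ := by
          rw [← Real.rpow_add hd]; ring_nf
    have : 0 ≤ 2 ^ |δ| * (u ^ (-(α+δ)) * ξ ^ (-β)) := by positivity
    linarith

/-- Layer cake. -/
lemma layer (q : ℝ) (hq : 0 < q) (x : ENNReal) :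
    x ^ q ≤ ∫⁻ t in Ioi (0:ℝ), (ENNReal.ofReal q * ENNReal.ofReal (t ^ (q-1))) *
      indicator {t : ℝ | ENNReal.ofReal t < x} 1 t := by
  have fin : ∀ y : ℝ≥0, (y : ENNReal) ≤ x → (y : ENNReal) ^ q ≤ ∫⁻ t in Ioi (0:ℝ), (ENNReal.ofReal q * ENNReal.ofReal (t ^ (q-1))) *
      indicator {t : ℝ | ENNReal.ofReal t < x} 1 t := by
    intro y hy
    calc (y : ENNReal) ^ q = ENNReal.ofReal q * ∫⁻ t in Ioc (0:ℝ) y, ENNReal.ofReal (t ^ (q-1)) := by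
          rw [P1 (q-1) (y:ℝ) (by linarith) y.coe_nonneg, ← ENNReal.ofReal_mul hq.le, sub_add_cancel,
            mul_div_cancel₀ _ hq.ne', ← ENNReal.ofReal_rpow_of_nonneg y.coe_nonneg hq.le]
          simp
      _ = ∫⁻ t in Ioo (0:ℝ) y, ENNReal.ofReal q * ENNReal.ofReal (t ^ (q-1)) := by
          rw [lintegral_const_mul' _ _ (by simp), restrict_Ioo_eq_restrict_Ioc]
      _ = ∫⁻ t in Ioo (0:ℝ) y, (ENNReal.ofReal q * ENNReal.ofReal (t ^ (q-1))) *
            indicator {t : ℝ | ENNReal.ofReal t < x} 1 t := by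
          refine setLIntegral_congr_fun measurableSet_Ioo ?_
          intro t ht
          have : t ∈ {t : ℝ | ENNReal.ofReal t < x} := by
            refine lt_of_lt_of_le ?_ hy
            rw [ENNReal.ofReal_lt_iff_lt_toReal ht.1.le (by simp)]
            exact ht.2
          simp only [indicator_of_mem this, Pi.one_apply, mul_one]
      _ ≤ _ := lintegral_mono_set (fun t ht => ht.1)
  induction x using ENNReal.recTopCoe with
  | coe y => exact fin y le_rfl
  | top =>
    rw [ENNReal.top_rpow_of_pos hq]
    by_contra hc
    push Not at hc
    obtain ⟨z, hz⟩ := ENNReal.lt_iff_exists_nnreal_btwn.1 hc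
    have := fin (z ^ (1/q)) le_top
    rw [ENNReal.coe_rpow_of_nonneg _ (by positivity), ← ENNReal.rpow_mul, one_div_mul_cancel hq.ne', ENNReal.rpow_one] at this
    exact absurd hz.1 (not_lt.2 this)

/-- truncated power kernel -/
noncomputable def ker (s : Set ℝ) (l : ℝ) (x : ℝ) : ENNReal :=
  s.indicator (fun x => ENNReal.ofReal (x ^ (-l))) x

lemma ker_meas (s : Set ℝ) (hs : MeasurableSet s) (l : ℝ) : Measurable (ker s l) := by
  unfold ker
  apply Measurable.indicator _ hs
  fun_prop

lemma ker_split (R l x : ℝ) (hR : 0 < R) : ker (Ioi 0) l x = ker (Ioc 0 R) l x + ker (Ioi R) l x := by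
  unfold ker
  by_cases h0 : 0 < x
  · by_cases h1 : R < x
    · rw [indicator_of_mem (show x ∈ Ioi (0:ℝ) from h0), indicator_of_mem (show x ∈ Ioi R from h1),
        indicator_of_notMem (by simp [h1]), zero_add]
    · rw [indicator_of_mem (show x ∈ Ioi (0:ℝ) from h0), indicator_of_notMem (show x ∉ Ioi R from h1),
        indicator_of_mem (show x ∈ Ioc 0 R from ⟨h0, not_lt.1 h1⟩), add_zero]
  · rw [indicator_of_notMem (by simpa using h0), indicator_of_notMem (by simp; intro h; exact absurd h h0),
      indicator_of_notMem (by simp; linarith [not_lt.1 h0])]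
    simp

lemma ker_int (R l : ℝ) (hl : l < 1) (hR : 0 < R) :
    ∫⁻ x, ker (Ioc 0 R) l x = ENNReal.ofReal (1 / (1 - l)) * ENNReal.ofReal (R ^ (1 - l)) := by
  unfold ker
  rw [lintegral_indicator measurableSet_Ioc, P1 _ _ (by linarith) hR.le, ← ENNReal.ofReal_mul
    (by apply one_div_nonneg.2; linarith)]
  congr 1
  rw [show -l + 1 = 1 - l by ring]; ring

lemma ker_tail (R r q l : ℝ) (hr : 1 < r) (hrq : r < q) (hl : l = 1 - (1/r - 1/q)) (hR : 0 < R)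
    (G : ℝ → ENNReal) (hG : Measurable G) (hG1 : ∫⁻ x, G x ^ r ≤ 1) (u : ℝ) :
    ∫⁻ ξ, ker (Ioi R) l (u - ξ) * G ξ ≤
      ENNReal.ofReal ((1 / (l * (r / (r-1)) - 1)) ^ ((r-1)/r)) * ENNReal.ofReal (R ^ (-(1/q))) := by
  have hr0 : 0 < r := by linarith
  have hq0 : 0 < q := by linarith
  have hr1 : 0 < r - 1 := by linarith
  have hc : (r / (r-1)).HolderConjugate r := (Real.HolderConjugate.conjExponent hr).symm
  have hlr : l * (r / (r-1)) = 1 + r / (q * (r-1)) := by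
    rw [hl]; field_simp; ring
  have hpos : 0 < r / (q * (r-1)) := by positivity
  have hm := ker_meas (Ioi R) measurableSet_Ioi l
  calc ∫⁻ ξ, ker (Ioi R) l (u - ξ) * G ξ
      ≤ (∫⁻ ξ, ker (Ioi R) l (u - ξ) ^ (r / (r-1))) ^ (1 / (r/(r-1))) * (∫⁻ ξ, G ξ ^ r) ^ (1/r) :=
        ENNReal.lintegral_mul_le_Lp_mul_Lq _ hc (by fun_prop) (by fun_prop)
    _ ≤ (∫⁻ ξ, ker (Ioi R) l (u - ξ) ^ (r / (r-1))) ^ (1 / (r/(r-1))) * 1 := by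
        gcongr
        exact ENNReal.rpow_le_one hG1 (by positivity)
    _ = (∫⁻ x, ker (Ioi R) l x ^ (r / (r-1))) ^ ((r-1)/r) := by
        rw [mul_one, lintegral_sub_left_eq_self (fun x => ker (Ioi R) l x ^ (r / (r-1))) u, one_div_div]
    _ = (∫⁻ x in Ioi R, ENNReal.ofReal (x ^ (-(l * (r / (r-1)))))) ^ ((r-1)/r) := by
        congr 1
        rw [← lintegral_indicator measurableSet_Ioi]
        congr 1
        ext x
        unfold ker
        by_cases hx : x ∈ Ioi R
        · have hx0 : 0 < x := hR.trans hx
          rw [indicator_of_mem hx, indicator_of_mem hx, ENNReal.ofReal_rpow_of_nonneg (by positivity) (by positivity),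
            ← Real.rpow_mul hx0.le, neg_mul]
        · rw [indicator_of_notMem hx, indicator_of_notMem hx, ENNReal.zero_rpow_of_pos (by positivity)]
    _ = _ := by
        rw [P2 _ _ (by linarith) hR, ENNReal.ofReal_rpow_of_nonneg _ (by positivity), ← ENNReal.ofReal_mul]
        · congr 1
          rw [hlr]
          rw [show -R ^ (-(1 + r / (q * (r - 1))) + 1) / (-(1 + r / (q * (r - 1))) + 1)
             = (1 / (1 + r / (q * (r - 1)) - 1)) * R ^ (- (r / (q * (r - 1)))) by
              rw [show -(1 + r / (q * (r - 1))) + 1 = -(r / (q * (r - 1))) by ring,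
                show (1 + r / (q * (r - 1)) - 1) = r / (q * (r - 1)) by ring, neg_div_neg_eq]
              ring]
          rw [Real.mul_rpow (by rw [add_sub_cancel_left]; positivity) (by positivity), ← Real.rpow_mul hR.le]
          congr 2
          field_simp
        · rw [hlr]; rw [add_sub_cancel_left]; positivity
        · rw [hlr, neg_add, neg_div, ← div_neg]
          apply div_nonneg (by positivity)
          linarith

lemma weak (r q l : ℝ) (hr : 1 < r) (hrq : r < q) (hl : l = 1 - (1/r - 1/q)) :
    ∃ A B : ℝ≥0, 0 < A ∧ ∀ G : ℝ → ENNReal, Measurable G → ∫⁻ x, G x ^ r ≤ 1 → ∀ t : ℝ, 0 < t →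
      volume {u | A * ENNReal.ofReal t < ∫⁻ ξ, ker (Ioi 0) l (u - ξ) * G ξ} ≤
        B * (ENNReal.ofReal (t ^ (-(q/r))) * ∫⁻ ξ, indicator {ξ | ENNReal.ofReal (t^(q/r)) < G ξ} G ξ) := by
  have hr0 : 0 < r := by linarith
  have hq0 : 0 < q := by linarith
  have hl1 : l < 1 := by
    have := one_div_lt_one_div_of_lt hr0 hrq
    linarith
  set a₁ := ((1 / (l * (r / (r-1)) - 1)) ^ ((r-1)/r)).toNNReal with ha1
  set a₂ := (1 / (1 - l)).toNNReal with ha2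
  refine ⟨a₁ + a₂ + 1, a₂, by positivity, ?_⟩
  intro G hG hG1 t ht
  set R := t ^ (-q) with hRdef
  have hR : 0 < R := by positivity
  set S := {ξ | ENNReal.ofReal (t^(q/r)) < G ξ} with hS
  have hSm : MeasurableSet S := measurableSet_lt measurable_const hG
  set k := ker (Ioc 0 R) l with hk
  have hkm : Measurable k := ker_meas _ measurableSet_Ioc l
  have hkI : ∫⁻ x, k x = a₂ * ENNReal.ofReal (R ^ (1 - l)) := ker_int R l hl1 hR
  have hGS : Measurable (S.indicator G) := hG.indicator hSm
  set F3 := fun u => ∫⁻ ξ, k (u - ξ) * S.indicator G ξ with hF3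
  have hF3m : Measurable F3 := by
    apply Measurable.lintegral_prod_right' (f := fun p : ℝ × ℝ => k (p.1 - p.2) * S.indicator G p.2)
    fun_prop
  have hpw : ∀ u, ∫⁻ ξ, ker (Ioi 0) l (u - ξ) * G ξ ≤ (a₁ + a₂) * ENNReal.ofReal t + F3 u := by
    intro u
    have e1 : ∫⁻ ξ, ker (Ioi R) l (u - ξ) * G ξ ≤ a₁ * ENNReal.ofReal t := by
      refine (ker_tail R r q l hr hrq hl hR G hG hG1 u).trans (le_of_eq ?_)
      rw [hRdef, ← Real.rpow_mul ht.le, show -q * -(1/q) = 1 by field_simp, Real.rpow_one]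
      rfl
    have e2 : ∫⁻ ξ, k (u - ξ) * ENNReal.ofReal (t^(q/r)) ≤ a₂ * ENNReal.ofReal t := by
      rw [lintegral_mul_const _ (by fun_prop), lintegral_sub_left_eq_self k u, hkI, mul_assoc,
        ← ENNReal.ofReal_mul (by positivity), hRdef, ← Real.rpow_mul ht.le, ← Real.rpow_add ht]
      rw [show -q * (1 - l) + q / r = 1 by rw [hl]; field_simp; ring, Real.rpow_one]
    calc ∫⁻ ξ, ker (Ioi 0) l (u - ξ) * G ξ
        ≤ ∫⁻ ξ, (ker (Ioi R) l (u - ξ) * G ξ + (k (u - ξ) * ENNReal.ofReal (t^(q/r)) +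
            k (u - ξ) * S.indicator G ξ)) := by
          refine lintegral_mono fun ξ => ?_
          simp only
          rw [ker_split R l _ hR, add_mul, add_comm, ← mul_add]
          gcongr
          by_cases hx : ξ ∈ S
          · rw [indicator_of_mem hx]; exact le_add_self
          · rw [indicator_of_notMem hx, add_zero]; exact not_lt.1 hx
      _ = (∫⁻ ξ, ker (Ioi R) l (u - ξ) * G ξ) + ((∫⁻ ξ, k (u - ξ) * ENNReal.ofReal (t^(q/r))) + F3 u) := by
          have := ker_meas (Ioi R) measurableSet_Ioi l
          rw [lintegral_add_left (by fun_prop), lintegral_add_left (by fun_prop)]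
      _ ≤ a₁ * ENNReal.ofReal t + (a₂ * ENNReal.ofReal t + F3 u) := by gcongr
      _ = _ := by ring
  have hsub : {u | ((a₁ + a₂ + 1 : ℝ≥0) : ENNReal) * ENNReal.ofReal t < ∫⁻ ξ, ker (Ioi 0) l (u - ξ) * G ξ} ⊆
      {u | ENNReal.ofReal t ≤ F3 u} := by
    intro u hu
    simp only [mem_ofPred_eq] at hu ⊢
    by_contra hc
    push Not at hc
    have := hu.trans_le (hpw u)
    push_cast at this
    rw [add_mul _ 1, one_mul] at this
    exact absurd this (not_lt.2 (by gcongr))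
  have hI : ∫⁻ u, F3 u = a₂ * ENNReal.ofReal (R ^ (1 - l)) * ∫⁻ ξ, S.indicator G ξ := by
    rw [hF3, lintegral_lintegral_swap (by fun_prop), ← lintegral_const_mul _ hGS]
    congr 1; ext ξ
    rw [lintegral_mul_const _ (by fun_prop), lintegral_sub_right_eq_self k ξ, hkI]
  have hM := mul_meas_ge_le_lintegral (μ := volume) hF3m (ENNReal.ofReal t)
  calc _ ≤ volume {u | ENNReal.ofReal t ≤ F3 u} := measure_mono hsub
    _ = ENNReal.ofReal (t⁻¹) * (ENNReal.ofReal t * volume {u | ENNReal.ofReal t ≤ F3 u}) := by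
        rw [← mul_assoc, ← ENNReal.ofReal_mul (by positivity), inv_mul_cancel₀ ht.ne']; simp
    _ ≤ ENNReal.ofReal (t⁻¹) * (a₂ * ENNReal.ofReal (R ^ (1 - l)) * ∫⁻ ξ, S.indicator G ξ) := by
        rw [← hI]; gcongr
    _ = a₂ * ((ENNReal.ofReal (t⁻¹) * ENNReal.ofReal (R ^ (1 - l))) * ∫⁻ ξ, S.indicator G ξ) := by ring
    _ = _ := by
        rw [← ENNReal.ofReal_mul (by positivity), hRdef, ← Real.rpow_mul ht.le, ← Real.rpow_neg_one,
          ← Real.rpow_add ht]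
        congr 4
        rw [hl]; field_simp; ring

lemma hls (r q l : ℝ) (hr : 1 < r) (hrq : r < q) (hl : l = 1 - (1/r - 1/q)) :
    ∃ C : ℝ≥0, ∀ G : ℝ → ENNReal, Measurable G → (∀ x, G x ≠ ⊤) → ∫⁻ x, G x ^ r ≤ 1 →
      ∫⁻ u, (∫⁻ ξ, ker (Ioi 0) l (u - ξ) * G ξ) ^ q ≤ C := by
  have hr0 : 0 < r := by linarith
  have hq0 : 0 < q := by linarith
  obtain ⟨A, B, hA, h⟩ := weak r q l hr hrq hl
  have hp : 0 < q - q / r := by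
    have : q / r < q := div_lt_self hq0 hr
    linarith
  refine ⟨A ^ q * (q.toNNReal * B * (1 / (q - q/r)).toNNReal), ?_⟩
  intro G hG hGf hG1
  have hA0 : (A : ENNReal) ≠ 0 := by simpa using hA.ne'
  set F := fun u => ∫⁻ ξ, ker (Ioi 0) l (u - ξ) * G ξ with hF
  have hkm := ker_meas (Ioi 0) measurableSet_Ioi l
  have hFm : Measurable F := by
    apply Measurable.lintegral_prod_right' (f := fun p : ℝ × ℝ => ker (Ioi 0) l (p.1 - p.2) * G p.2)
    fun_prop
  have hset : ∀ (t : ℝ) (x : ENNReal), ENNReal.ofReal t < x / A ↔ A * ENNReal.ofReal t < x := by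
    intro t x
    rw [ENNReal.lt_div_iff_mul_lt (Or.inl hA0) (Or.inl (by simp)), mul_comm]
  -- inner integral
  have inner : ∀ y : ENNReal, y ≠ ⊤ → ∫⁻ t in Ioi (0:ℝ), ENNReal.ofReal (t ^ (q - q/r - 1)) *
      indicator {t : ℝ | ENNReal.ofReal (t ^ (q/r)) < y} 1 t * y ≤ (1 / (q - q/r)).toNNReal * y ^ r := by
    intro y hy
    lift y to ℝ≥0 using hy
    calc _ ≤ ∫⁻ t in Ioi (0:ℝ), (Ioc (0:ℝ) ((y:ℝ) ^ (r/q))).indicator (fun t => ENNReal.ofReal (t ^ (q - q/r - 1))) t * (y : ENNReal) := by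
          refine setLIntegral_mono' measurableSet_Ioi ?_
          intro t ht
          have ht : 0 < t := ht
          gcongr
          by_cases hm : ENNReal.ofReal (t ^ (q/r)) < y
          · have h1 : t ^ (q/r) < y := by
              rw [ENNReal.ofReal_lt_iff_lt_toReal (by positivity) (by simp)] at hm
              exact hm
            have h2 : t ≤ (y:ℝ) ^ (r/q) := by
              have := Real.rpow_le_rpow (by positivity) h1.le (show 0 ≤ r / q by positivity)
              rwa [← Real.rpow_mul ht.le, show q / r * (r / q) = 1 by field_simp, Real.rpow_one] at this
            rw [indicator_of_mem (show t ∈ Ioc (0:ℝ) ((y:ℝ) ^ (r/q)) from ⟨ht, h2⟩), indicator_of_mem (by exact hm)]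
            simp
          · rw [indicator_of_notMem (by exact hm)]; simp
      _ ≤ ∫⁻ t, (Ioc (0:ℝ) ((y:ℝ) ^ (r/q))).indicator (fun t => ENNReal.ofReal (t ^ (q - q/r - 1))) t * (y : ENNReal) :=
          setLIntegral_le_lintegral _ _
      _ = ENNReal.ofReal (1 / (q - q/r)) * (ENNReal.ofReal (((y:ℝ) ^ (r/q)) ^ (q - q/r)) * (y : ENNReal)) := by
          rw [lintegral_mul_const' _ _ (by simp), lintegral_indicator measurableSet_Ioc,
            P1 _ _ (by linarith) (by positivity), sub_add_cancel, ← mul_assoc, ← ENNReal.ofReal_mul (by positivity)]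
          congr 2
          ring
      _ = _ := by
          rw [ENNReal.ofReal.eq_1 (1 / (q - q/r))]
          congr 1
          rw [← Real.rpow_mul y.coe_nonneg, show r / q * (q - q/r) = r - 1 by field_simp,
            ← ENNReal.ofReal_rpow_of_nonneg y.coe_nonneg (by linarith), ENNReal.ofReal_coe_nnreal]
          nth_rw 2 [← ENNReal.rpow_one (y : ENNReal)]
          rw [← ENNReal.rpow_add_of_nonneg _ _ (by linarith) (by norm_num), sub_add_cancel]
  calc ∫⁻ u, F u ^ q = A ^ q * ∫⁻ u, (F u / A) ^ q := by
        rw [← lintegral_const_mul _ (by fun_prop)]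
        congr 1; ext u
        rw [← ENNReal.mul_rpow_of_nonneg _ _ hq0.le, ENNReal.mul_div_cancel hA0 (by simp)]
    _ ≤ A ^ q * ∫⁻ u, ∫⁻ t in Ioi (0:ℝ), (ENNReal.ofReal q * ENNReal.ofReal (t ^ (q-1))) *
          indicator {t : ℝ | ENNReal.ofReal t < F u / A} 1 t := by
        gcongr with u
        exact layer q hq0 _
    _ = A ^ q * ∫⁻ t in Ioi (0:ℝ), (ENNReal.ofReal q * ENNReal.ofReal (t ^ (q-1))) *
          volume {u | A * ENNReal.ofReal t < F u} := by
        congr 1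
        rw [lintegral_lintegral_swap]
        · congr 1; ext t
          rw [lintegral_const_mul' _ _ (by finiteness)]
          congr 1
          rw [← lintegral_indicator_one (measurableSet_lt measurable_const hFm)]
          congr 1; ext u
          simp only [indicator_apply, mem_ofPred_eq, hset, Pi.one_apply]
        · apply Measurable.aemeasurable
          apply Measurable.mul
          · fun_prop
          · apply Measurable.indicator (f := fun _ => (1:ENNReal)) (s := {p : ℝ × ℝ | ENNReal.ofReal p.2 < F p.1 / A}) measurable_const
            apply measurableSet_lt <;> fun_prop
    _ ≤ A ^ q * ∫⁻ t in Ioi (0:ℝ), (ENNReal.ofReal q * B) * ∫⁻ ξ, ENNReal.ofReal (t ^ (q - q/r - 1)) *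
      indicator {t : ℝ | ENNReal.ofReal (t ^ (q/r)) < G ξ} 1 t * G ξ := by
        refine mul_le_mul_right ?_ _
        refine setLIntegral_mono' measurableSet_Ioi ?_
        intro t ht
        have ht : 0 < t := ht
        calc _ ≤ (ENNReal.ofReal q * ENNReal.ofReal (t ^ (q-1))) * (B * (ENNReal.ofReal (t ^ (-(q/r))) * ∫⁻ ξ, indicator {ξ | ENNReal.ofReal (t^(q/r)) < G ξ} G ξ)) := by
              gcongr
              exact h G hG hG1 t ht
          _ = (ENNReal.ofReal q * B) * ((ENNReal.ofReal (t ^ (q-1)) * ENNReal.ofReal (t ^ (-(q/r)))) * ∫⁻ ξ, indicator {ξ | ENNReal.ofReal (t^(q/r)) < G ξ} G ξ) := by ring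
          _ = _ := by
              rw [← ENNReal.ofReal_mul (by positivity), ← Real.rpow_add ht, ← lintegral_const_mul' _ _ (by finiteness)]
              congr 2; ext ξ
              rw [show q - 1 + -(q / r) = q - q/r - 1 by ring, mul_assoc]
              congr 1
              simp only [indicator_apply, mem_ofPred_eq]
              split_ifs <;> simp
    _ = A ^ q * ((ENNReal.ofReal q * B) * ∫⁻ ξ, ∫⁻ t in Ioi (0:ℝ), ENNReal.ofReal (t ^ (q - q/r - 1)) *
      indicator {t : ℝ | ENNReal.ofReal (t ^ (q/r)) < G ξ} 1 t * G ξ) := by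
        rw [lintegral_const_mul' _ _ (by finiteness), lintegral_lintegral_swap]
        apply Measurable.aemeasurable
        apply Measurable.mul
        · apply Measurable.mul
          · fun_prop
          · apply Measurable.indicator (f := fun _ => (1:ENNReal)) (s := {p : ℝ × ℝ | ENNReal.ofReal (p.1 ^ (q/r)) < G p.2}) measurable_const
            apply measurableSet_lt <;> fun_prop
        · fun_prop
    _ ≤ A ^ q * ((ENNReal.ofReal q * B) * ∫⁻ ξ, (1 / (q - q/r)).toNNReal * G ξ ^ r) := by
        gcongr with ξ
        exact inner _ (hGf ξ)
    _ ≤ A ^ q * ((ENNReal.ofReal q * B) * ((1 / (q - q/r)).toNNReal * 1)) := by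
        rw [lintegral_const_mul _ (by fun_prop)]
        gcongr
    _ = _ := by
        push_cast
        rw [ENNReal.coe_rpow_of_nonneg _ hq0.le, mul_one]
        rfl

lemma hardy (r q a β : ℝ) (hr : 1 < r) (hrq : r < q) (hl : a + β = 1 - (1/r - 1/q)) (ha : 1/q < a) :
    ∃ C : ℝ≥0, ∀ G : ℝ → ENNReal, Measurable G → ∫⁻ x, G x ^ r ≤ 1 →
      ∫⁻ u in Ioi (0:ℝ), (ENNReal.ofReal (u ^ (-a)) *
        ∫⁻ ξ in Ioc 0 u, ENNReal.ofReal (ξ ^ (-β)) * G ξ) ^ q ≤ C := by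
  have hr0 : 0 < r := by linarith
  have hq0 : 0 < q := by linarith
  have hr1 : 0 < r - 1 := by linarith
  have hc : (r / (r-1)).HolderConjugate r := (Real.HolderConjugate.conjExponent hr).symm
  obtain ⟨ε, hε, hεβ⟩ : ∃ ε : ℝ, 0 < ε ∧ ε + β < 1 - 1/r := by
    refine ⟨(1 - 1/r - β)/2, ?_, ?_⟩ <;> linarith
  set m := 1 - (ε + β) * (r/(r-1)) with hm
  have hm0 : 0 < m := by
    rw [show m = (1 - 1/r - (ε + β)) * (r/(r-1)) by rw [hm]; field_simp]
    apply mul_pos <;> [linarith; positivity]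
  set c := (1 / m) ^ ((r-1)/r) with hcdef
  have hc0 : 0 < c := by positivity
  refine ⟨(c ^ q).toNNReal * (1 / (ε * r)).toNNReal, ?_⟩
  intro G hG hG1
  set J := fun u : ℝ => ∫⁻ ξ in Ioc 0 u, ENNReal.ofReal (ξ ^ (ε * r)) * G ξ ^ r with hJ
  have hJu : ∀ u : ℝ, 0 < u → J u ≤ ENNReal.ofReal (u ^ (ε * r)) := by
    intro u hu
    calc J u ≤ ∫⁻ ξ in Ioc 0 u, ENNReal.ofReal (u ^ (ε * r)) * G ξ ^ r := by
          refine setLIntegral_mono' measurableSet_Ioc ?_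
          intro ξ hξ
          gcongr
          · exact hξ.1.le
          · exact hξ.2
      _ ≤ ∫⁻ ξ, ENNReal.ofReal (u ^ (ε * r)) * G ξ ^ r := setLIntegral_le_lintegral _ _
      _ ≤ ENNReal.ofReal (u ^ (ε * r)) * 1 := by
          rw [lintegral_const_mul _ (by fun_prop)]; gcongr
      _ = _ := mul_one _
  have hH : ∀ u : ℝ, 0 < u → ∫⁻ ξ in Ioc 0 u, ENNReal.ofReal (ξ ^ (-β)) * G ξ ≤
      ENNReal.ofReal (c * u ^ (1 - 1/r - (ε + β))) * J u ^ (1/r) := by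
    intro u hu
    calc ∫⁻ ξ in Ioc 0 u, ENNReal.ofReal (ξ ^ (-β)) * G ξ
        = ∫⁻ ξ in Ioc 0 u, ((fun ξ => ENNReal.ofReal (ξ ^ (-(ε+β)))) * (fun ξ => ENNReal.ofReal (ξ ^ ε) * G ξ)) ξ := by
          refine setLIntegral_congr_fun measurableSet_Ioc ?_
          intro ξ hξ
          simp only [Pi.mul_apply]
          rw [← mul_assoc, ← ENNReal.ofReal_mul (Real.rpow_nonneg hξ.1.le _), ← Real.rpow_add hξ.1]
          congr 3; ring
      _ ≤ (∫⁻ ξ in Ioc 0 u, ENNReal.ofReal (ξ ^ (-(ε+β))) ^ (r/(r-1))) ^ (1 / (r/(r-1))) *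
          (∫⁻ ξ in Ioc 0 u, (ENNReal.ofReal (ξ ^ ε) * G ξ) ^ r) ^ (1/r) :=
          ENNReal.lintegral_mul_le_Lp_mul_Lq _ hc (by fun_prop) (by fun_prop)
      _ = (∫⁻ ξ in Ioc 0 u, ENNReal.ofReal (ξ ^ (m - 1))) ^ ((r-1)/r) * J u ^ (1/r) := by
          rw [one_div_div]
          congr 2
          · refine setLIntegral_congr_fun measurableSet_Ioc ?_
            intro ξ hξ
            simp only
            rw [ENNReal.ofReal_rpow_of_nonneg (Real.rpow_nonneg hξ.1.le _) (by positivity), ← Real.rpow_mul hξ.1.le]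
            congr 2; rw [hm]; ring
          · refine setLIntegral_congr_fun measurableSet_Ioc ?_
            intro ξ hξ
            simp only
            rw [ENNReal.mul_rpow_of_nonneg _ _ hr0.le, ENNReal.ofReal_rpow_of_nonneg (Real.rpow_nonneg hξ.1.le _) (by positivity), ← Real.rpow_mul hξ.1.le]
      _ = _ := by
          rw [P1 _ _ (by linarith) hu.le, sub_add_cancel, ENNReal.ofReal_rpow_of_nonneg (by positivity) (by positivity)]
          congr 2
          rw [show u ^ m / m = (1/m) * u ^ m by ring, Real.mul_rpow (by positivity) (by positivity), ← Real.rpow_mul hu.le]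
          congr 2
          rw [hm]; field_simp
  have hmain : ∀ u : ℝ, 0 < u → (ENNReal.ofReal (u ^ (-a)) *
        ∫⁻ ξ in Ioc 0 u, ENNReal.ofReal (ξ ^ (-β)) * G ξ) ^ q ≤
        ENNReal.ofReal (c ^ q) * (ENNReal.ofReal (u ^ (-1 - ε * r)) * J u) := by
    intro u hu
    calc _ ≤ (ENNReal.ofReal (u ^ (-a)) * (ENNReal.ofReal (c * u ^ (1 - 1/r - (ε + β))) * J u ^ (1/r))) ^ q := by
          gcongr; exact hH u hu
      _ = (ENNReal.ofReal (c * u ^ (-(1/q) - ε)) * J u ^ (1/r)) ^ q := by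
          rw [← mul_assoc, ← ENNReal.ofReal_mul (by positivity), mul_left_comm, ← Real.rpow_add hu]
          congr 5; linarith
      _ = ENNReal.ofReal (c ^ q * u ^ (-1 - ε * q)) * (J u ^ ((q - r)/r) * J u) := by
          rw [ENNReal.mul_rpow_of_nonneg _ _ hq0.le, ENNReal.ofReal_rpow_of_nonneg (by positivity) hq0.le,
            ← ENNReal.rpow_mul, Real.mul_rpow hc0.le (by positivity), ← Real.rpow_mul hu.le]
          congr 1
          · congr 3; field_simp
          · nth_rw 3 [← ENNReal.rpow_one (J u)]
            rw [← ENNReal.rpow_add_of_nonneg _ _ (div_nonneg (by linarith) hr0.le) (by norm_num)]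
            congr 1; field_simp; ring
      _ ≤ ENNReal.ofReal (c ^ q * u ^ (-1 - ε * q)) * (ENNReal.ofReal (u ^ (ε * r)) ^ ((q - r)/r) * J u) := by
          have : 0 ≤ (q - r) / r := div_nonneg (by linarith) hr0.le
          gcongr; exact hJu u hu
      _ = _ := by
          rw [ENNReal.ofReal_rpow_of_nonneg (by positivity) (div_nonneg (by linarith) hr0.le), ← Real.rpow_mul hu.le,
            ← mul_assoc, ← mul_assoc, ← ENNReal.ofReal_mul (by positivity), ← ENNReal.ofReal_mul (by positivity),
            mul_assoc, ← Real.rpow_add hu]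
          congr 4; field_simp; ring
  have hεr : 0 < ε * r := by positivity
  calc _ ≤ ∫⁻ u in Ioi (0:ℝ), ENNReal.ofReal (c ^ q) * (ENNReal.ofReal (u ^ (-1 - ε * r)) * J u) :=
        setLIntegral_mono' measurableSet_Ioi (fun u hu => hmain u hu)
    _ = ENNReal.ofReal (c ^ q) * ∫⁻ u in Ioi (0:ℝ), ∫⁻ ξ,
          indicator {p : ℝ × ℝ | 0 < p.2 ∧ p.2 ≤ p.1} (fun p : ℝ × ℝ => ENNReal.ofReal (p.1 ^ (-1 - ε * r)) * (ENNReal.ofReal (p.2 ^ (ε * r)) * G p.2 ^ r)) (u, ξ) := by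
        rw [lintegral_const_mul' _ _ (by finiteness)]
        congr 2; ext u
        rw [hJ, ← lintegral_const_mul' _ _ (by finiteness), ← lintegral_indicator measurableSet_Ioc]
        rfl
    _ = ENNReal.ofReal (c ^ q) * ∫⁻ ξ, ∫⁻ u in Ioi (0:ℝ),
          indicator {p : ℝ × ℝ | 0 < p.2 ∧ p.2 ≤ p.1} (fun p : ℝ × ℝ => ENNReal.ofReal (p.1 ^ (-1 - ε * r)) * (ENNReal.ofReal (p.2 ^ (ε * r)) * G p.2 ^ r)) (u, ξ) := by
        rw [lintegral_lintegral_swap]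
        apply Measurable.aemeasurable
        apply Measurable.indicator
        · fun_prop
        · exact (measurableSet_lt measurable_const measurable_snd).inter (measurableSet_le measurable_snd measurable_fst)
    _ ≤ ENNReal.ofReal (c ^ q) * ∫⁻ ξ, ENNReal.ofReal (1 / (ε * r)) * G ξ ^ r := by
        gcongr with ξ
        by_cases hξ : 0 < ξ
        · calc _ ≤ ∫⁻ u, (Ici ξ).indicator (fun u => ENNReal.ofReal (u ^ (-1 - ε * r)) * (ENNReal.ofReal (ξ ^ (ε * r)) * G ξ ^ r)) u := by
                refine (setLIntegral_le_lintegral _ _).trans (lintegral_mono fun u => ?_)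
                simp only [indicator_apply, mem_ofPred_eq, mem_Ici, hξ, true_and]
                exact le_rfl
            _ = ENNReal.ofReal (1 / (ε * r) * ξ ^ (- (ε * r))) * (ENNReal.ofReal (ξ ^ (ε * r)) * G ξ ^ r) := by
                rw [lintegral_indicator measurableSet_Ici, lintegral_mul_const _ (by fun_prop), ← restrict_Ioi_eq_restrict_Ici,
                  P2 _ _ (by linarith) hξ]
                congr 2
                rw [show -1 - ε * r + 1 = -(ε * r) by ring, neg_div_neg_eq]; ring
            _ = _ := by
                rw [← mul_assoc, ← ENNReal.ofReal_mul (by positivity), mul_assoc, ← Real.rpow_add hξ]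
                simp
            _ ≤ _ := le_rfl
        · simp [indicator_apply, hξ]
    _ ≤ ENNReal.ofReal (c ^ q) * (ENNReal.ofReal (1 / (ε * r)) * 1) := by
        rw [lintegral_const_mul _ (by fun_prop)]; gcongr
    _ = _ := by
        rw [mul_one]; push_cast; rfl

lemma normalized (r q α β δ : ℝ) (hr : 1 < r) (hrq : r < q)
    (hsum : α + β + δ = 1 - (1/r - 1/q)) (hab : 0 ≤ α + β) (had : α + δ > 1/q) :
    ∃ C : ℝ≥0, ∀ G : ℝ → ENNReal, Measurable G → (∀ x, G x ≠ ⊤) → ∫⁻ x, G x ^ r ≤ 1 →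
      ∫⁻ u in Ioi (0:ℝ), (∫⁻ ξ in Ioo 0 u, ENNReal.ofReal ((u - ξ) ^ (-δ) * ξ ^ (-β) * u ^ (-α)) * G ξ) ^ q ≤ C := by
  have hq0 : 0 < q := by linarith
  obtain ⟨C1, h1⟩ := hls r q (α + β + δ) hr hrq hsum
  obtain ⟨C2, h2⟩ := hardy r q (α + δ) β hr hrq (by linarith) had
  set c1 : ℝ≥0 := (2 ^ |β| : ℝ).toNNReal with hc1
  set c2 : ℝ≥0 := (2 ^ |δ| : ℝ).toNNReal with hc2
  refine ⟨2 ^ (q - 1) * (c1 ^ q * C1 + c2 ^ q * C2), ?_⟩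
  intro G hG hGf hG1
  set F := fun u => ∫⁻ ξ, ker (Ioi 0) (α + β + δ) (u - ξ) * G ξ with hF
  set H := fun u => ENNReal.ofReal (u ^ (-(α + δ))) * ∫⁻ ξ in Ioc 0 u, ENNReal.ofReal (ξ ^ (-β)) * G ξ with hH
  have hkm := ker_meas (Ioi 0) measurableSet_Ioi (α + β + δ)
  have hFm : Measurable F := by
    apply Measurable.lintegral_prod_right' (f := fun p : ℝ × ℝ => ker (Ioi 0) (α + β + δ) (p.1 - p.2) * G p.2)
    fun_prop
  have hpw : ∀ u : ℝ, ∫⁻ ξ in Ioo 0 u, ENNReal.ofReal ((u - ξ) ^ (-δ) * ξ ^ (-β) * u ^ (-α)) * G ξ ≤ c1 * F u + c2 * H u := by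
    intro u
    calc _ ≤ ∫⁻ ξ in Ioo 0 u, (c1 * (ker (Ioi 0) (α + β + δ) (u - ξ) * G ξ) + c2 * (ENNReal.ofReal (u ^ (-(α + δ))) * (ENNReal.ofReal (ξ ^ (-β)) * G ξ))) := by
          refine setLIntegral_mono' measurableSet_Ioo ?_
          intro ξ hξ
          have hu : 0 < u := hξ.1.trans hξ.2
          have hd : 0 < u - ξ := sub_pos.2 hξ.2
          have hξ0 := hξ.1
          rw [ker, indicator_of_mem (by exact hd)]
          calc _ ≤ ENNReal.ofReal (2 ^ |β| * (u - ξ) ^ (-(α + β + δ)) + 2 ^ |δ| * (u ^ (-(α+δ)) * ξ ^ (-β))) * G ξ := by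
                gcongr; exact kerbound α β δ u ξ hab hξ.1 hξ.2
            _ = _ := by
                rw [ENNReal.ofReal_add (by positivity) (by positivity), ENNReal.ofReal_mul (by positivity),
                  ENNReal.ofReal_mul (by positivity), ENNReal.ofReal_mul (by positivity), ENNReal.ofReal.eq_1 (2 ^ |β|),
                  ENNReal.ofReal.eq_1 (2 ^ |δ|)]
                ring
      _ = c1 * (∫⁻ ξ in Ioo 0 u, ker (Ioi 0) (α + β + δ) (u - ξ) * G ξ) + c2 * (ENNReal.ofReal (u ^ (-(α + δ))) * ∫⁻ ξ in Ioo 0 u, ENNReal.ofReal (ξ ^ (-β)) * G ξ) := by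
          rw [lintegral_add_left (by fun_prop), lintegral_const_mul' _ _ (by finiteness), lintegral_const_mul' _ _ (by finiteness),
            lintegral_const_mul' _ _ (by finiteness)]
      _ ≤ _ := by
          simp only [hF, hH]
          gcongr
          · exact Measure.restrict_le_self
          · exact Ioo_subset_Ioc_self
  calc _ ≤ ∫⁻ u in Ioi (0:ℝ), 2 ^ (q-1) * (c1 ^ q * F u ^ q + c2 ^ q * H u ^ q) := by
        refine lintegral_mono fun u => ?_
        calc _ ≤ (c1 * F u + c2 * H u) ^ q := by gcongr; exact hpw u
          _ ≤ 2 ^ (q-1) * ((c1 * F u) ^ q + (c2 * H u) ^ q) := ENNReal.rpow_add_le_mul_rpow_add_rpow _ _ (by linarith)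
          _ = _ := by rw [ENNReal.mul_rpow_of_nonneg _ _ hq0.le, ENNReal.mul_rpow_of_nonneg _ _ hq0.le]
    _ = 2 ^ (q-1) * (c1 ^ q * (∫⁻ u in Ioi (0:ℝ), F u ^ q) + c2 ^ q * ∫⁻ u in Ioi (0:ℝ), H u ^ q) := by
        have e1 : (2:ENNReal) ^ (q-1) ≠ ⊤ := ENNReal.rpow_ne_top_of_nonneg (by linarith) (by simp)
        have e2 : (c1:ENNReal) ^ q ≠ ⊤ := ENNReal.rpow_ne_top_of_nonneg (by linarith) (by simp)
        have e3 : (c2:ENNReal) ^ q ≠ ⊤ := ENNReal.rpow_ne_top_of_nonneg (by linarith) (by simp)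
        rw [lintegral_const_mul' _ _ e1, lintegral_add_left (by fun_prop), lintegral_const_mul' _ _ e2,
          lintegral_const_mul' _ _ e3]
    _ ≤ 2 ^ (q-1) * (c1 ^ q * C1 + c2 ^ q * C2) := by
        gcongr
        · exact (setLIntegral_le_lintegral _ _).trans (h1 G hG hGf hG1)
        · exact h2 G hG hG1
    _ = _ := by
        push_cast
        rw [ENNReal.coe_rpow_of_nonneg _ (by linarith), ENNReal.coe_rpow_of_nonneg _ (by linarith), ENNReal.coe_rpow_of_nonneg _ (by linarith)]
        rfl

theorem stmt_8 (r q α β δ : ℝ) (hr : 1 < r) (hrq : r < q)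
    (hsum : α + β + δ = 1 - (1/r - 1/q)) (hab : 0 ≤ α + β) (had : α + δ > 1/q) :
    ∃ C : ℝ≥0, ∀ g : ℝ → ℝ, Measurable g →
      eLpNorm (fun u : ℝ => ∫ ξ in Ioo (0:ℝ) u,
          g ξ / (|u - ξ| ^ δ * |ξ| ^ β * |u| ^ α))
        (ENNReal.ofReal q) (volume.restrict (Ioi (0:ℝ)))
      ≤ C * eLpNorm g (ENNReal.ofReal r) (volume.restrict (Ioi (0:ℝ))) := by
  have hr0 : 0 < r := by linarith
  have hq0 : 0 < q := by linarith
  obtain ⟨C, hC⟩ := normalized r q α β δ hr hrq hsum hab had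
  refine ⟨C ^ (1/q) + 1, ?_⟩
  intro g hg
  set N := eLpNorm g (ENNReal.ofReal r) (volume.restrict (Ioi (0:ℝ))) with hN
  set G : ℝ → ENNReal := (Ioi (0:ℝ)).indicator (fun x => ‖g x‖ₑ) with hGdef
  have hGm : Measurable G := by
    apply Measurable.indicator _ measurableSet_Ioi
    fun_prop
  have hGf : ∀ x, G x ≠ ⊤ := by
    intro x
    simp only [hGdef, indicator_apply]
    split_ifs <;> simp
  have hNG : N = (∫⁻ x, G x ^ r) ^ (1/r) := by
    rw [hN, eLpNorm_eq_lintegral_rpow_enorm_toReal (by simpa using hr0) (by simp), ENNReal.toReal_ofReal hr0.le,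
      ← lintegral_indicator measurableSet_Ioi]
    congr 2; ext x
    simp only [hGdef, indicator_apply]
    split_ifs
    · rfl
    · rw [ENNReal.zero_rpow_of_pos hr0]
  rcases eq_or_ne N ⊤ with hNt | hNt
  · rw [hNt, ENNReal.mul_top]
    · exact le_top
    · simp
  have hfu : eLpNorm (fun u : ℝ => ∫ ξ in Ioo (0:ℝ) u,
          g ξ / (|u - ξ| ^ δ * |ξ| ^ β * |u| ^ α))
        (ENNReal.ofReal q) (volume.restrict (Ioi (0:ℝ))) ≤
      (∫⁻ u in Ioi (0:ℝ), (∫⁻ ξ in Ioo 0 u, ENNReal.ofReal ((u - ξ) ^ (-δ) * ξ ^ (-β) * u ^ (-α)) * G ξ) ^ q) ^ (1/q) := by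
    rw [eLpNorm_eq_lintegral_rpow_enorm_toReal (by simpa using hq0) (by simp), ENNReal.toReal_ofReal hq0.le]
    gcongr with u
    refine (enorm_integral_le_lintegral_enorm _).trans ?_
    refine setLIntegral_mono' measurableSet_Ioo ?_
    intro ξ hξ
    have hξ0 := hξ.1
    have hu : 0 < u := hξ.1.trans hξ.2
    have hd : 0 < u - ξ := sub_pos.2 hξ.2
    rw [hGdef, indicator_of_mem (show ξ ∈ Ioi (0:ℝ) from hξ0), abs_of_pos hξ0, abs_of_pos hu, abs_of_pos hd, div_eq_inv_mul,
      enorm_mul, Real.enorm_eq_ofReal (by positivity), Real.rpow_neg hd.le, Real.rpow_neg hξ0.le, Real.rpow_neg hu.le,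
      ← mul_inv, ← mul_inv]
  refine hfu.trans ?_
  rcases eq_or_ne N 0 with hN0 | hN0
  · have hz : ∫⁻ x, G x ^ r = 0 := by
      rw [hN0] at hNG
      exact (ENNReal.rpow_eq_zero_iff_of_pos (by positivity)).1 hNG.symm
    have hae : G =ᵐ[volume] 0 := by
      rw [lintegral_eq_zero_iff (by fun_prop)] at hz
      filter_upwards [hz] with x hx
      exact (ENNReal.rpow_eq_zero_iff_of_pos hr0).1 hx
    have : ∀ u : ℝ, ∫⁻ ξ in Ioo 0 u, ENNReal.ofReal ((u - ξ) ^ (-δ) * ξ ^ (-β) * u ^ (-α)) * G ξ = 0 := by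
      intro u
      rw [lintegral_eq_zero_iff (by fun_prop)]
      filter_upwards [ae_restrict_of_ae hae] with x hx
      simp [hx]
    simp only [this]
    rw [ENNReal.zero_rpow_of_pos hq0]
    simp [hq0]
  have hGN : ∫⁻ x, (N⁻¹ * G x) ^ r ≤ 1 := by
    simp only [ENNReal.mul_rpow_of_nonneg _ _ hr0.le]
    rw [lintegral_const_mul _ (by fun_prop)]
    have : ∫⁻ x, G x ^ r = N ^ r := by
      rw [hNG, ← ENNReal.rpow_mul, one_div_mul_cancel hr0.ne', ENNReal.rpow_one]
    rw [this, ← ENNReal.mul_rpow_of_nonneg _ _ hr0.le, ENNReal.inv_mul_cancel hN0 hNt, ENNReal.one_rpow]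
  have h := hC (fun x => N⁻¹ * G x) (by fun_prop) (fun x => ENNReal.mul_ne_top (by simpa using hN0) (hGf x)) hGN
  have hNi : N⁻¹ ≠ ⊤ := by simpa using hN0
  calc _ = N * (∫⁻ u in Ioi (0:ℝ), (∫⁻ ξ in Ioo 0 u, ENNReal.ofReal ((u - ξ) ^ (-δ) * ξ ^ (-β) * u ^ (-α)) * (N⁻¹ * G ξ)) ^ q) ^ (1/q) := by
        simp only [mul_left_comm _ N⁻¹, lintegral_const_mul' _ _ hNi, ENNReal.mul_rpow_of_nonneg _ _ hq0.le]
        rw [lintegral_const_mul' _ _ (ENNReal.rpow_ne_top_of_nonneg hq0.le hNi),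
          ENNReal.mul_rpow_of_nonneg _ _ (by positivity), ← ENNReal.rpow_mul, mul_one_div_cancel hq0.ne', ENNReal.rpow_one,
          ← mul_assoc, ENNReal.mul_inv_cancel hN0 hNt, one_mul]
    _ ≤ N * (C : ENNReal) ^ (1/q) := by gcongr
    _ ≤ _ := by
        rw [mul_comm]
        push_cast
        rw [ENNReal.coe_rpow_of_nonneg _ (by positivity)]
        gcongr
        exact le_self_add
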